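/- High-to-low energy transfer lower bound for the first Picard iterate in H^s: let k ≥ 2 be an integer and s < 0. There exist constants c > 0 and δ > 0, depending only on k and s, such that for all R > 0, all A ≥ 1, all N with A ≤ δ·N, and all T with 0 < T ≤ δ, one has ‖⟨ξ⟩^s Ξ̂₁(φ̂, 0)(T)‖_{L²(ℝ)} ≥ c·R^k·T²·A^{k − 1/2 + s}, where φ̂ = R·χ_Ω and Ξ̂₁(φ̂, 0)(T,ξ) = ∫₀ᵀ sin((T−t')λ(ξ))·λ(ξ)·((cos(t'λ(·))·φ̂)^{∗k})(ξ) dt' is the k-fold self-convolution Duhamel term. -/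

import Mathlib

open MeasureTheory Filter
open scoped ENNReal

noncomputable section

/-- The Japanese bracket weight `⟨ξ⟩^s = (1+ξ²)^(s/2)`. -/
def jbw (s ξ : ℝ) : ℝ := (1 + ξ ^ 2) ^ (s / 2)

/-- `λ(ξ) = |ξ|/⟨ξ⟩`. -/
def lam (ξ : ℝ) : ℝ := |ξ| / (1 + ξ ^ 2) ^ ((1 : ℝ) / 2)

/-- The multiplier `m(t,ξ) = sin(tλ(ξ))/λ(ξ)` for `ξ ≠ 0`, `m(t,0) = t`. -/
def mker (t ξ : ℝ) : ℝ := if ξ = 0 then t else Real.sin (t * lam ξ) / lam ξ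

/-- Fourier side linear propagator `Ŝ(t)(v₀,v₁)`. -/
def Shat (t : ℝ) (v₀ v₁ : ℝ → ℂ) (ξ : ℝ) : ℂ :=
  (Real.cos (t * lam ξ) : ℂ) * v₀ ξ + (mker t ξ : ℂ) * v₁ ξ

/-- Convolution of complex valued functions on `ℝ`. -/
def conv (f g : ℝ → ℂ) (ξ : ℝ) : ℂ := ∫ η, f η * g (ξ - η)

/-- Iterated convolution of a list of functions. -/
def convList : List (ℝ → ℂ) → ℝ → ℂ
  | [] => fun _ => 0
  | [f] => f
  | f :: g :: fs => conv f (convList (g :: fs))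

/-- Fourier side Duhamel operator `Î_k`. -/
def Ihat (k : ℕ) (w : Fin k → ℝ → ℝ → ℂ) (t ξ : ℝ) : ℂ :=
  ∫ t' in (0:ℝ)..t,
    ((Real.sin ((t - t') * lam ξ) * lam ξ : ℝ) : ℂ) * convList (List.ofFn fun i => w i t') ξ

/-- Continuity of a curve of functions with respect to the `L¹` norm, on `[0,T]`. -/
def ContinuousL1On (T : ℝ) (v : ℝ → ℝ → ℂ) : Prop :=
  ∀ t₀ ∈ Set.Icc (0 : ℝ) T,
    Tendsto (fun t => eLpNorm (fun ξ => v t ξ - v t₀ ξ) 1 volume)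
      (nhdsWithin t₀ (Set.Icc (0 : ℝ) T)) (nhds 0)

/-- Fourier-side solution of the generalized improved Boussinesq equation with
nonlinearity `u^k` and data `(v₀, v₁)` on `[0, T]`. -/
def IsGIBqSol (k : ℕ) (T : ℝ) (v₀ v₁ : ℝ → ℂ) (v : ℝ → ℝ → ℂ) : Prop :=
  (∀ t ∈ Set.Icc (0 : ℝ) T, Integrable (v t)) ∧
  ContinuousL1On T v ∧
  ∀ t ∈ Set.Icc (0 : ℝ) T,
    ∀ᵐ ξ ∂volume, v t ξ = Shat t v₀ v₁ ξ + Ihat k (fun _ => v) t ξ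

/-- Picard iterates `Ξ̂_j` for gIBq on the Fourier side. -/
def Xi (k : ℕ) (v₀ v₁ : ℝ → ℂ) : ℕ → ℝ → ℝ → ℂ
  | 0 => fun t => Shat t v₀ v₁
  | (j+1) => fun t ξ =>
      ∑ p ∈ (Finset.Nat.antidiagonalTuple k j).attach,
        Ihat k (fun i => Xi k v₀ v₁ (p.1 i)) t ξ
decreasing_by
  have hsum := Finset.Nat.mem_antidiagonalTuple.mp p.2
  have hle : p.1 i ≤ j := by
    calc p.1 i ≤ ∑ i', p.1 i' :=
          Finset.single_le_sum (fun _ _ => Nat.zero_le _) (Finset.mem_univ i)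
      _ = j := hsum
  omega

/-- The `FL^{s,p}` norm on the Fourier side: `‖⟨ξ⟩^s w‖_{L^p}`. -/
def FLnorm (s : ℝ) (p : ℝ≥0∞) (w : ℝ → ℂ) : ℝ≥0∞ :=
  eLpNorm (fun ξ => jbw s ξ * ‖w ξ‖) p volume

end

noncomputable section

/-- The frequency set `Ω = ⋃_{η ∈ {-2N,-N,N,2N}} [η - A/2, η + A/2]`. -/
def Omeg (N A : ℝ) : Set ℝ :=
  ⋃ η ∈ ({-(2 * N), -N, N, 2 * N} : Set ℝ), Set.Icc (η - A / 2) (η + A / 2)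

/-- The Fourier-side perturbation `φ̂ = R·χ_Ω`. -/
def phihat (R N A : ℝ) : ℝ → ℂ := Set.indicator (Omeg N A) fun _ => (R : ℂ)

end

/-!
At times `0 ≤ t ≤ 1` the free evolution `cos(tλ)φ` of nonnegative Fourier data `φ` lies between
`φ / 2` and `φ`. All factors of the Duhamel integrand being nonnegative, no cancellation occurs, and
`Ξ̂₁` is bounded below by a multiple of `T² λ² (φ ∗ ⋯ ∗ φ)`. For `φ = R χ_Ω` the set of centres
`Σ = {-2N, -N, N, 2N}` satisfies `Σ ⊆ Σ + Σ` and `0 ∈ Σ + Σ`, so the `k`-fold self-convolution is at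
least of order `R^k A^(k-1)` on `[-A/2, A/2]`. Taking the norm over `[A/4, A/2]` only, where
`⟨ξ⟩ ∼ A` and `λ(ξ)` is bounded below, gives the claim.
-/

section ConvPow

open ContinuousLinearMap
open scoped Convolution

variable {G : Type*} [AddGroup G] [MeasurableSpace G]

/-- The self-convolution `f ∗ ⋯ ∗ f` with `n` convolution products, hence `n + 1` factors: the
empty product is left out because convolution has no unit among functions. -/
noncomputable def convPow (μ : Measure G) (f : G → ℝ) : ℕ → G → ℝ
  | 0 => f
  | n + 1 => f ⋆[lsmul ℝ ℝ, μ] convPow μ f n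

variable {μ : Measure G} {f g : G → ℝ} {M : ℝ}

theorem convPow_succ_apply (f : G → ℝ) (n : ℕ) (x : G) :
    convPow μ f (n + 1) x = ∫ y, f y * convPow μ f n (x - y) ∂μ := rfl

theorem convPow_nonneg (hf : ∀ x, 0 ≤ f x) (n : ℕ) (x : G) : 0 ≤ convPow μ f n x := by
  induction n generalizing x with
  | zero => exact hf x
  | succ n ih => exact integral_nonneg fun y => mul_nonneg (hf y) (ih _)

theorem convPow_smul (c : ℝ) (n : ℕ) : convPow μ (c • f) n = c ^ (n + 1) • convPow μ f n := by
  induction n with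
  | zero => simp only [convPow, zero_add, pow_one]
  | succ n ih =>
    rw [convPow, ih, smul_convolution, convolution_smul, smul_smul, ← pow_succ', convPow]

theorem abs_convPow_le (hf : Integrable f μ) (hM : ∀ x, |f x| ≤ M) (n : ℕ) (x : G) :
    |convPow μ f n x| ≤ (∫ y, |f y| ∂μ) ^ n * M := by
  induction n generalizing x with
  | zero => simpa only [convPow, pow_zero, one_mul] using hM x
  | succ n ih =>
    rw [convPow_succ_apply, pow_succ', mul_assoc, ← integral_mul_const, ← Real.norm_eq_abs]
    refine norm_integral_le_of_norm_le (hf.abs.mul_const _) (ae_of_all _ fun y => ?_)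
    rw [Real.norm_eq_abs, abs_mul]
    exact mul_le_mul_of_nonneg_left (ih (x - y)) (abs_nonneg (f y))

variable [MeasurableAdd₂ G] [MeasurableNeg G] [SFinite μ]

theorem measurable_convPow {α : Type*} [MeasurableSpace α] {w : α → G → ℝ}
    (hw : Measurable fun z : α × G => w z.1 z.2) (n : ℕ) :
    Measurable fun z : α × G => convPow μ (w z.1) n z.2 := by
  induction n with
  | zero => exact hw
  | succ n ih =>
    have hleft : Measurable fun z : (α × G) × G => w z.1.1 z.2 :=
      hw.comp (measurable_fst.fst.prodMk measurable_snd)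
    have hright : Measurable fun z : (α × G) × G => convPow μ (w z.1.1) n (z.1.2 - z.2) :=
      ih.comp (measurable_fst.fst.prodMk (measurable_fst.snd.sub measurable_snd))
    exact (hleft.mul hright).stronglyMeasurable.integral_prod_right.measurable

variable [μ.IsAddRightInvariant]

theorem convolutionExistsAt_of_abs_le (hf : Integrable f μ) (hg : AEStronglyMeasurable g μ)
    (hM : ∀ x, |g x| ≤ M) (x : G) : ConvolutionExistsAt f g x (lsmul ℝ ℝ) μ := by
  refine (hf.norm.mul_const M).mono' (hf.1.convolution_integrand_snd _ hg x)
    (ae_of_all _ fun y => ?_)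
  rw [lsmul_apply, norm_smul]
  exact mul_le_mul_of_nonneg_left (hM (x - y)) (norm_nonneg (f y))

theorem integrable_convPow (hf : Integrable f μ) (n : ℕ) : Integrable (convPow μ f n) μ := by
  induction n with
  | zero => exact hf
  | succ n ih => exact hf.integrable_convolution _ ih

theorem convolutionExistsAt_convPow (hf : Integrable f μ) (hM : ∀ x, |f x| ≤ M) (n : ℕ) (x : G) :
    ConvolutionExistsAt f (convPow μ f n) x (lsmul ℝ ℝ) μ :=
  convolutionExistsAt_of_abs_le hf (integrable_convPow hf n).1 (abs_convPow_le hf hM n) x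

theorem abs_convPow_le_convPow (hg : Integrable g μ) (hM : ∀ x, g x ≤ M)
    (hfg : ∀ x, |f x| ≤ g x) (n : ℕ) (x : G) : |convPow μ f n x| ≤ convPow μ g n x := by
  have hg0 : ∀ x, 0 ≤ g x := fun x => (abs_nonneg _).trans (hfg x)
  induction n generalizing x with
  | zero => exact hfg x
  | succ n ih =>
    have hgM : ∀ x, |g x| ≤ M := fun x => (abs_of_nonneg (hg0 x)).trans_le (hM x)
    rw [convPow_succ_apply, convPow_succ_apply, ← Real.norm_eq_abs]
    refine norm_integral_le_of_norm_le (convolutionExistsAt_convPow hg hgM n x)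
      (ae_of_all _ fun y => ?_)
    rw [Real.norm_eq_abs, abs_mul]
    exact mul_le_mul (hfg y) (ih (x - y)) (abs_nonneg _) (hg0 y)

theorem convPow_mono (hg : Integrable g μ) (hM : ∀ x, g x ≤ M) (hf : ∀ x, 0 ≤ f x)
    (hfg : ∀ x, f x ≤ g x) (n : ℕ) (x : G) : convPow μ f n x ≤ convPow μ g n x :=
  (le_abs_self _).trans <|
    abs_convPow_le_convPow hg hM (fun x => (abs_of_nonneg (hf x)).trans_le (hfg x)) n x

end ConvPow

section Boxes

open Set ContinuousLinearMap
open scoped Convolution Pointwise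

variable {f g : ℝ → ℝ} {a b p q r x : ℝ}

theorem mul_mul_le_convolution_of_le_on_Icc (hfg : ConvolutionExistsAt f g x (lsmul ℝ ℝ))
    (hf : ∀ y, 0 ≤ f y) (hg : ∀ y, 0 ≤ g y) (hb : 0 ≤ b) (hr : 0 ≤ r)
    (hfa : ∀ y ∈ Icc (p - r) (p + r), a ≤ f y) (hgb : ∀ y ∈ Icc (q - r) (q + r), b ≤ g y)
    (hx : x ∈ Icc (p + q - r) (p + q + r)) : a * b * r ≤ (f ⋆ g) x := by
  -- For `y` in `I`, both `y` and `x - y` are within `r` of `p` and `q`.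
  set I := Icc ((p + x - q) / 2 - r / 2) ((p + x - q) / 2 + r / 2)
  calc a * b * r = ∫ _ in I, a * b := by
        rw [setIntegral_const, Real.volume_real_Icc_of_le (by linarith), smul_eq_mul]
        ring
    _ ≤ ∫ y in I, f y * g (x - y) := by
        refine setIntegral_mono_on (integrableOn_const measure_Icc_lt_top.ne) hfg.integrableOn
          measurableSet_Icc fun y hy => mul_le_mul (hfa y ?_) (hgb (x - y) ?_) hb (hf y)
        · constructor <;> linarith [hx.1, hx.2, hy.1, hy.2]
        · constructor <;> linarith [hx.1, hx.2, hy.1, hy.2]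
    _ ≤ (f ⋆ g) x :=
        setIntegral_le_integral hfg (ae_of_all _ fun y => mul_nonneg (hf y) (hg (x - y)))

theorem pow_mul_pow_le_convPow_of_subset_add {S : Set ℝ} {M : ℝ} (hS : S ⊆ S + S)
    (hfi : Integrable f) (hf : ∀ y, 0 ≤ f y) (hM : ∀ y, f y ≤ M) (ha : 0 ≤ a) (hr : 0 ≤ r)
    (hfa : ∀ p ∈ S, ∀ y ∈ Icc (p - r) (p + r), a ≤ f y) (n : ℕ) (hp : p ∈ S + S)
    (hx : x ∈ Icc (p - r) (p + r)) : a ^ (n + 2) * r ^ (n + 1) ≤ convPow volume f (n + 1) x := by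
  have hfM : ∀ y, |f y| ≤ M := fun y => (abs_of_nonneg (hf y)).trans_le (hM y)
  have add_box : ∀ n (b : ℝ), 0 ≤ b →
      (∀ q ∈ S, ∀ y ∈ Icc (q - r) (q + r), b ≤ convPow volume f n y) →
      ∀ p ∈ S + S, ∀ x ∈ Icc (p - r) (p + r), a * b * r ≤ convPow volume f (n + 1) x := by
    rintro n b hb hfb _ ⟨q, hq, q', hq', rfl⟩ x hx
    exact mul_mul_le_convolution_of_le_on_Icc (convolutionExistsAt_convPow hfi hfM n x) hf
      (convPow_nonneg hf n) hb hr (hfa q hq) (hfb q' hq') hx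
  induction n generalizing p x with
  | zero =>
    calc a ^ 2 * r ^ 1 = a * a * r := by ring
      _ ≤ convPow volume f 1 x := add_box 0 a ha hfa p hp x hx
  | succ n ih =>
    calc a ^ (n + 1 + 2) * r ^ (n + 1 + 1) = a * (a ^ (n + 2) * r ^ (n + 1)) * r := by ring
      _ ≤ convPow volume f (n + 1 + 1) x :=
        add_box (n + 1) _ (by positivity) (fun q hq y hy => ih (hS hq) hy) p hp x hx

end Boxes

section Dispersion

theorem lam_sq (ξ : ℝ) : lam ξ ^ 2 = ξ ^ 2 / (1 + ξ ^ 2) := by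
  rw [lam, ← Real.sqrt_eq_rpow, div_pow, sq_abs, Real.sq_sqrt (by positivity)]

theorem lam_nonneg (ξ : ℝ) : 0 ≤ lam ξ := by unfold lam; positivity

theorem lam_le_one (ξ : ℝ) : lam ξ ≤ 1 := by
  rw [← sq_le_one_iff₀ (lam_nonneg ξ), lam_sq, div_le_one (by positivity)]
  linarith

theorem measurable_lam : Measurable lam := by unfold lam; fun_prop

variable {t : ℝ}

theorem mul_lam_mem_Icc (ht0 : 0 ≤ t) (ht1 : t ≤ 1) (ξ : ℝ) : t * lam ξ ∈ Set.Icc 0 1 :=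
  ⟨mul_nonneg ht0 (lam_nonneg ξ), mul_le_one₀ ht1 (lam_nonneg ξ) (lam_le_one ξ)⟩

theorem one_half_le_cos_mul_lam (ht0 : 0 ≤ t) (ht1 : t ≤ 1) (ξ : ℝ) :
    1 / 2 ≤ Real.cos (t * lam ξ) := by
  obtain ⟨h0, h1⟩ := mul_lam_mem_Icc ht0 ht1 ξ
  nlinarith [Real.one_sub_sq_div_two_le_cos (x := t * lam ξ)]

theorem mul_lam_sq_div_two_le_sin_mul_lam (ht0 : 0 ≤ t) (ht1 : t ≤ 1) (ξ : ℝ) :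
    t * (lam ξ ^ 2 / 2) ≤ Real.sin (t * lam ξ) * lam ξ := by
  obtain ⟨h0, h1⟩ := mul_lam_mem_Icc ht0 ht1 ξ
  have hpi : 1 / 2 ≤ 2 / Real.pi := by
    rw [div_le_div_iff₀ two_pos Real.pi_pos]
    linarith [Real.pi_le_four]
  calc t * (lam ξ ^ 2 / 2) = 1 / 2 * (t * lam ξ) * lam ξ := by ring
    _ ≤ 2 / Real.pi * (t * lam ξ) * lam ξ := by
        gcongr
        exact lam_nonneg ξ
    _ ≤ Real.sin (t * lam ξ) * lam ξ :=
        mul_le_mul_of_nonneg_right (Real.mul_le_sin h0 (by linarith [Real.pi_gt_three]))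
          (lam_nonneg ξ)

end Dispersion

section FirstIterate

/-- The free evolution, on the Fourier side, of real data `φ` with zero initial velocity. -/
noncomputable def freeEvolution (φ : ℝ → ℝ) (t ξ : ℝ) : ℝ := Real.cos (t * lam ξ) * φ ξ

theorem Xi_one (k : ℕ) (v₀ v₁ : ℝ → ℂ) :
    Xi k v₀ v₁ 1 = Ihat k fun _ t => Shat t v₀ v₁ := by
  ext t ξ
  rw [Xi]
  beta_reduce
  rw [Finset.sum_attach (Finset.Nat.antidiagonalTuple k 0)
    fun p => Ihat k (fun i => Xi k v₀ v₁ (p i)) t ξ,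
    Finset.Nat.antidiagonalTuple_zero_right, Finset.sum_singleton]
  simp only [Pi.zero_apply, Xi]

theorem Shat_ofReal_zero (φ : ℝ → ℝ) (t : ℝ) :
    Shat t (fun ξ => (φ ξ : ℂ)) 0 = fun ξ => (freeEvolution φ t ξ : ℂ) := by
  ext ξ
  simp only [Shat, freeEvolution, Pi.zero_apply, mul_zero, add_zero, Complex.ofReal_mul]

theorem convList_replicate_ofReal (f : ℝ → ℝ) (n : ℕ) :
    convList (List.replicate (n + 1) fun ξ => (f ξ : ℂ)) =
      fun ξ => (convPow volume f n ξ : ℂ) := by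
  induction n with
  | zero => rfl
  | succ n ih =>
    ext ξ
    rw [List.replicate_succ, List.replicate_succ, convList, ← List.replicate_succ, ih, conv,
      convPow_succ_apply, ← integral_complex_ofReal]
    simp only [Complex.ofReal_mul]

theorem Xi_one_ofReal_zero (φ : ℝ → ℝ) (n : ℕ) (T ξ : ℝ) :
    Xi (n + 1) (fun ξ => (φ ξ : ℂ)) 0 1 T ξ =
      ((∫ t in (0 : ℝ)..T, Real.sin ((T - t) * lam ξ) * lam ξ *
        convPow volume (freeEvolution φ t) n ξ : ℝ) : ℂ) := by
  rw [Xi_one, Ihat, ← intervalIntegral.integral_ofReal]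
  simp only [List.ofFn_const, Shat_ofReal_zero, convList_replicate_ofReal, Complex.ofReal_mul]

variable {φ : ℝ → ℝ} {M t : ℝ}

theorem measurable_freeEvolution (hφ : Measurable φ) :
    Measurable fun z : ℝ × ℝ => freeEvolution φ z.1 z.2 := by
  have := measurable_lam
  unfold freeEvolution
  fun_prop

theorem abs_freeEvolution_le (hφ : ∀ ξ, 0 ≤ φ ξ) (t ξ : ℝ) : |freeEvolution φ t ξ| ≤ φ ξ := by
  rw [freeEvolution, abs_mul, abs_of_nonneg (hφ ξ)]
  exact mul_le_of_le_one_left (hφ ξ) (Real.abs_cos_le_one _)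

theorem integrable_freeEvolution (hφm : Measurable φ) (hφi : Integrable φ) (hφ : ∀ ξ, 0 ≤ φ ξ)
    (t : ℝ) : Integrable (freeEvolution φ t) :=
  hφi.mono' ((measurable_freeEvolution hφm).comp measurable_prodMk_left).aestronglyMeasurable
    (ae_of_all _ (abs_freeEvolution_le hφ t))

theorem half_pow_mul_convPow_le_convPow_freeEvolution (hφm : Measurable φ) (hφi : Integrable φ)
    (hφ : ∀ ξ, 0 ≤ φ ξ) (hM : ∀ ξ, φ ξ ≤ M) (ht0 : 0 ≤ t) (ht1 : t ≤ 1) (n : ℕ) (ξ : ℝ) :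
    (1 / 2) ^ (n + 1) * convPow volume φ n ξ ≤ convPow volume (freeEvolution φ t) n ξ := by
  rw [← smul_eq_mul, ← Pi.smul_apply, ← convPow_smul]
  exact convPow_mono (integrable_freeEvolution hφm hφi hφ t)
    (fun ξ => (le_abs_self _).trans ((abs_freeEvolution_le hφ t ξ).trans (hM ξ)))
    (fun ξ => mul_nonneg one_half_pos.le (hφ ξ))
    (fun ξ => mul_le_mul_of_nonneg_right (one_half_le_cos_mul_lam ht0 ht1 ξ) (hφ ξ)) n ξ

theorem intervalIntegrable_duhamel (hφm : Measurable φ) (hφi : Integrable φ) (hφ : ∀ ξ, 0 ≤ φ ξ)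
    (hM : ∀ ξ, φ ξ ≤ M) (n : ℕ) (T ξ a b : ℝ) :
    IntervalIntegrable (fun t => Real.sin ((T - t) * lam ξ) * lam ξ *
      convPow volume (freeEvolution φ t) n ξ) volume a b := by
  have hmeas : Measurable fun z : ℝ × ℝ => convPow volume (freeEvolution φ z.1) n z.2 :=
    measurable_convPow (measurable_freeEvolution hφm) n
  have hbound : ∀ t, ‖convPow volume (freeEvolution φ t) n ξ‖ ≤ convPow volume φ n ξ := fun t =>
    abs_convPow_le_convPow hφi hM (abs_freeEvolution_le hφ t) n ξ
  have hconv : IntervalIntegrable (fun t => convPow volume (freeEvolution φ t) n ξ) volume a b :=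
    (intervalIntegrable_const (c := convPow volume φ n ξ)).mono_fun'
      (hmeas.comp (measurable_prodMk_right (y := ξ))).aestronglyMeasurable (ae_of_all _ hbound)
  exact hconv.continuousOn_mul (by fun_prop)

theorem le_norm_Xi_one (hφm : Measurable φ) (hφi : Integrable φ) (hφ : ∀ ξ, 0 ≤ φ ξ)
    (hM : ∀ ξ, φ ξ ≤ M) {T : ℝ} (hT0 : 0 ≤ T) (hT1 : T ≤ 1) (n : ℕ) (ξ : ℝ) :
    T ^ 2 / 4 * lam ξ ^ 2 * ((1 / 2) ^ (n + 1) * convPow volume φ n ξ) ≤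
      ‖Xi (n + 1) (fun ξ => (φ ξ : ℂ)) 0 1 T ξ‖ := by
  rw [Xi_one_ofReal_zero, Complex.norm_real]
  set B := (1 / 2) ^ (n + 1) * convPow volume φ n ξ
  have hB : 0 ≤ B := mul_nonneg (by positivity) (convPow_nonneg hφ n ξ)
  calc T ^ 2 / 4 * lam ξ ^ 2 * B = ∫ t in (0 : ℝ)..T, (T - t) * (lam ξ ^ 2 / 2) * B := by
        rw [intervalIntegral.integral_mul_const, intervalIntegral.integral_mul_const,
          intervalIntegral.integral_comp_sub_left (fun t => t), integral_id]
        ring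
    _ ≤ ∫ t in (0 : ℝ)..T,
          Real.sin ((T - t) * lam ξ) * lam ξ * convPow volume (freeEvolution φ t) n ξ := by
        refine intervalIntegral.integral_mono_on hT0
          (Continuous.intervalIntegrable (by fun_prop) _ _)
          (intervalIntegrable_duhamel hφm hφi hφ hM n T ξ 0 T) fun t ⟨ht0, htT⟩ => ?_
        have hsin := mul_lam_sq_div_two_le_sin_mul_lam (sub_nonneg.2 htT) (by linarith) ξ
        have hconv := half_pow_mul_convPow_le_convPow_freeEvolution hφm hφi hφ hM ht0
          (htT.trans hT1) n ξ
        exact mul_le_mul hsin hconv hB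
          ((mul_nonneg (sub_nonneg.2 htT) (by positivity)).trans hsin)
    _ ≤ _ := le_abs_self _

end FirstIterate

section BoxData

open scoped Pointwise

variable {R A : ℝ}

theorem measurableSet_Omeg (N A : ℝ) : MeasurableSet (Omeg N A) :=
  (Set.toFinite _).measurableSet_biUnion fun _ _ => measurableSet_Icc

theorem volume_Omeg_lt_top (N A : ℝ) : volume (Omeg N A) < ∞ :=
  measure_biUnion_lt_top (Set.toFinite _) fun _ _ => measure_Icc_lt_top

theorem integrable_indicator_Omeg (R N A : ℝ) :
    Integrable ((Omeg N A).indicator fun _ => R) :=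
  (integrable_indicator_iff (measurableSet_Omeg N A)).2
    (integrableOn_const (volume_Omeg_lt_top N A).ne)

theorem phihat_eq_ofReal (R N A : ℝ) :
    phihat R N A = fun ξ => (((Omeg N A).indicator (fun _ => R) ξ : ℝ) : ℂ) :=
  Set.indicator_comp_of_zero Complex.ofReal_zero

theorem pow_mul_pow_le_convPow_indicator_Omeg (hR : 0 ≤ R) (N : ℝ) (hA : 0 ≤ A) (n : ℕ) {ξ : ℝ}
    (hξ : ξ ∈ Set.Icc (-(A / 2)) (A / 2)) :
    R ^ (n + 2) * (A / 2) ^ (n + 1) ≤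
      convPow volume ((Omeg N A).indicator fun _ => R) (n + 1) ξ := by
  set S : Set ℝ := {-(2 * N), -N, N, 2 * N} with hS
  have hsum : S ⊆ S + S := by
    rintro _ (hp | hp | hp | hp)
    · exact ⟨-N, by simp [hS], -N, by simp [hS], by rw [hp]; ring⟩
    · exact ⟨-(2 * N), by simp [hS], N, by simp [hS], by rw [hp]; ring⟩
    · exact ⟨2 * N, by simp [hS], -N, by simp [hS], by rw [hp]; ring⟩
    · exact ⟨N, by simp [hS], N, by simp [hS], by rw [hp]; ring⟩
  have hzero : (0 : ℝ) ∈ S + S := ⟨N, by simp [hS], -N, by simp [hS], by ring⟩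
  refine pow_mul_pow_le_convPow_of_subset_add hsum (integrable_indicator_Omeg R N A)
    (Set.indicator_nonneg fun _ _ => hR) (Set.indicator_le_self' fun _ _ => hR) hR (by positivity)
    (fun p hp y hy => ?_) n hzero (by simpa using hξ)
  rw [Set.indicator_of_mem (show y ∈ Omeg N A from Set.mem_biUnion hp hy)]

end BoxData

section FourierLebesgueNorm

theorem ofReal_mul_measure_rpow_le_FLnorm {s b d : ℝ} {p : ℝ≥0∞} {w : ℝ → ℂ} {E : Set ℝ}
    (hE : MeasurableSet E) (hE0 : volume E ≠ 0) (hp : p ≠ 0) (hb : 0 ≤ b) (hd : 0 ≤ d)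
    (hjbw : ∀ ξ ∈ E, b ≤ jbw s ξ) (hw : ∀ ξ ∈ E, d ≤ ‖w ξ‖) :
    ENNReal.ofReal (b * d) * volume E ^ (1 / p.toReal) ≤ FLnorm s p w := by
  have hbd : 0 ≤ b * d := mul_nonneg hb hd
  rw [← Real.enorm_eq_ofReal hbd, ← eLpNorm_indicator_const' hE hE0 hp]
  refine eLpNorm_mono fun ξ => ?_
  by_cases hξ : ξ ∈ E
  · rw [Set.indicator_of_mem hξ, Real.norm_of_nonneg hbd]
    exact (mul_le_mul (hjbw ξ hξ) (hw ξ hξ) hd (hb.trans (hjbw ξ hξ))).trans (le_abs_self _)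
  · rw [Set.indicator_of_notMem hξ, norm_zero]
    exact norm_nonneg _

theorem min_rpow_le_rpow_of_mem_Icc {a b x : ℝ} (ha : 0 < a) (hx : x ∈ Set.Icc a b) (r : ℝ) :
    min (a ^ r) (b ^ r) ≤ x ^ r := by
  rcases le_total 0 r with hr | hr
  · exact (min_le_left _ _).trans (Real.rpow_le_rpow ha.le hx.1 hr)
  · exact (min_le_right _ _).trans (Real.rpow_le_rpow_of_nonpos (ha.trans_le hx.1) hx.2 hr)

theorem min_rpow_mul_rpow_le_jbw (s : ℝ) {A ξ : ℝ} (hA : 1 ≤ A)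
    (hξ : ξ ∈ Set.Icc (A / 4) (A / 2)) :
    min ((1 / 16 : ℝ) ^ (s / 2)) (2 ^ (s / 2)) * A ^ s ≤ jbw s ξ := by
  have hA0 : 0 < A := one_pos.trans_le hA
  have hratio : (1 + ξ ^ 2) / A ^ 2 ∈ Set.Icc (1 / 16 : ℝ) 2 := by
    constructor
    · rw [le_div_iff₀ (by positivity)]
      nlinarith [hξ.1]
    · rw [div_le_iff₀ (by positivity)]
      nlinarith [hξ.1, hξ.2]
  calc min ((1 / 16 : ℝ) ^ (s / 2)) (2 ^ (s / 2)) * A ^ s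
      ≤ ((1 + ξ ^ 2) / A ^ 2) ^ (s / 2) * A ^ s := by
        gcongr
        exact min_rpow_le_rpow_of_mem_Icc (by norm_num) hratio _
    _ = ((1 + ξ ^ 2) / A ^ 2) ^ (s / 2) * (A ^ 2) ^ (s / 2) := by
        rw [← Real.rpow_natCast_mul hA0.le, Nat.cast_ofNat, mul_div_cancel₀ s two_ne_zero]
    _ = jbw s ξ := by
        rw [← Real.mul_rpow (by positivity) (by positivity), div_mul_cancel₀ _ (by positivity), jbw]

end FourierLebesgueNorm

theorem le_norm_Xi_one_phihat {R A T ξ : ℝ} (hR : 0 ≤ R) (N : ℝ) (hA : 1 ≤ A) (hT0 : 0 ≤ T)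
    (hT1 : T ≤ 1) (n : ℕ) (hξ : ξ ∈ Set.Icc (A / 4) (A / 2)) :
    T ^ 2 / 68 * ((1 / 2) ^ (n + 2) * (R ^ (n + 2) * (A / 2) ^ (n + 1))) ≤
      ‖Xi (n + 2) (phihat R N A) 0 1 T ξ‖ := by
  have hlam : 1 / 17 ≤ lam ξ ^ 2 := by
    rw [lam_sq, div_le_div_iff₀ (by norm_num) (by positivity)]
    nlinarith [hξ.1]
  have hconv := pow_mul_pow_le_convPow_indicator_Omeg hR N (zero_le_one.trans hA) n
    (ξ := ξ) ⟨by linarith [hξ.1], hξ.2⟩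
  calc T ^ 2 / 68 * ((1 / 2) ^ (n + 2) * (R ^ (n + 2) * (A / 2) ^ (n + 1)))
      = T ^ 2 / 4 * (1 / 17) * ((1 / 2) ^ (n + 2) * (R ^ (n + 2) * (A / 2) ^ (n + 1))) := by ring
    _ ≤ T ^ 2 / 4 * lam ξ ^ 2 * ((1 / 2) ^ (n + 2) *
          convPow volume ((Omeg N A).indicator fun _ => R) (n + 1) ξ) := by gcongr
    _ ≤ ‖Xi (n + 2) (phihat R N A) 0 1 T ξ‖ := by
        rw [phihat_eq_ofReal]
        exact le_norm_Xi_one (measurable_const.indicator (measurableSet_Omeg N A))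
          (integrable_indicator_Omeg R N A) (Set.indicator_nonneg fun _ _ => hR)
          (Set.indicator_le_self' fun _ _ => hR) hT0 hT1 (n + 1) ξ

/-- For `p = ∞` the exponent `1 / p.toReal` is `0`, as it should be. -/
theorem first_picard_lower_bound_Hs_general (k : ℕ) (hk : 2 ≤ k) (s : ℝ) {p : ℝ≥0∞}
    (hp : p ≠ 0) :
    ∃ c : ℝ, 0 < c ∧
      ∀ R A N T : ℝ, 0 ≤ R → 1 ≤ A → 0 ≤ T → T ≤ 1 →
        ENNReal.ofReal (c * R ^ k * T ^ 2 * A ^ ((k : ℝ) - 1 + 1 / p.toReal + s)) ≤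
          FLnorm s p (Xi k (phihat R N A) 0 1 T) := by
  obtain ⟨n, rfl⟩ := Nat.exists_eq_add_of_le' hk
  set c₀ := min ((1 / 16 : ℝ) ^ (s / 2)) (2 ^ (s / 2))
  refine ⟨c₀ * (1 / 68 * ((1 / 2) ^ (n + 2) * (1 / 2) ^ (n + 1))) * (1 / 4) ^ (1 / p.toReal),
    by positivity, fun R A N T hR hA hT0 hT1 => ?_⟩
  have hA0 : 0 < A := one_pos.trans_le hA
  set d := T ^ 2 / 68 * ((1 / 2) ^ (n + 2) * (R ^ (n + 2) * (A / 2) ^ (n + 1)))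
  have hvol : volume (Set.Icc (A / 4) (A / 2)) = ENNReal.ofReal (1 / 4 * A) := by
    rw [Real.volume_Icc]
    ring_nf
  have hpow : A ^ (((n + 2 : ℕ) : ℝ) - 1 + 1 / p.toReal + s) =
      A ^ (n + 1) * A ^ (1 / p.toReal) * A ^ s := by
    rw [← Real.rpow_natCast, ← Real.rpow_add hA0, ← Real.rpow_add hA0]
    push_cast
    ring_nf
  calc _ = ENNReal.ofReal (c₀ * A ^ s * d) *
          volume (Set.Icc (A / 4) (A / 2)) ^ (1 / p.toReal) := by
        rw [hvol, ENNReal.ofReal_rpow_of_nonneg (by positivity) (by positivity),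
          ← ENNReal.ofReal_mul (by positivity), hpow, Real.mul_rpow (by norm_num) hA0.le]
        congr 1
        ring
    _ ≤ FLnorm s p (Xi (n + 2) (phihat R N A) 0 1 T) :=
        ofReal_mul_measure_rpow_le_FLnorm measurableSet_Icc (by rw [hvol]; positivity) hp
          (by positivity) (by positivity) (fun ξ => min_rpow_mul_rpow_le_jbw s hA)
          (fun ξ => le_norm_Xi_one_phihat hR N hA hT0 hT1 n)

/-- High-to-low energy transfer lower bound for the first Picard iterate in `H^s`:
`‖⟨ξ⟩^s Ξ̂₁(φ̂, 0)(T)‖_{L²} ≥ c·R^k·T²·A^{k - 1/2 + s}`. -/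
theorem first_picard_lower_bound_Hs (k : ℕ) (hk : 2 ≤ k) (s : ℝ) (hs : s < 0) :
    ∃ c δ : ℝ, 0 < c ∧ 0 < δ ∧
      ∀ R A N T : ℝ, 0 < R → 1 ≤ A → A ≤ δ * N → 0 < T → T ≤ δ →
        ENNReal.ofReal (c * R ^ k * T ^ 2 * A ^ ((k : ℝ) - 1 / 2 + s)) ≤
          FLnorm s 2 (Xi k (phihat R N A) 0 1 T) := by
  obtain ⟨c, hc, hbound⟩ := first_picard_lower_bound_Hs_general k hk s two_ne_zero
  have hexp : (k : ℝ) - 1 + 1 / (2 : ℝ≥0∞).toReal + s = k - 1 / 2 + s := by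
    rw [ENNReal.toReal_ofNat]
    ring
  exact ⟨c, 1, hc, one_pos, fun R A N T hR hA _ hT hT1 =>
    hexp ▸ hbound R A N T hR.le hA hT.le hT1⟩
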